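/- In the logic PL^S₀, for distinct propositional variables A and B, none of the formulae A ∨ ¬A, A ⊃ (¬A ⊃ B), and ¬(A ∧ ¬A) is derivable. -/

import Mathlib

/-!  Deep embedding of the many-sorted paraconsistent logic `PL^S₀`
(a many-sorted version of López-Escobar's refutability calculus).

Formulae are built from atomic formulae (a predicate symbol applied to a list
of sorted individual variables) using implication `⊃`, conjunction `∧`,
disjunction `∨`, a primitive negation `¬`, and sorted quantifiers `∀`, `∃`.
Each variable carries a fixed sort given by a map `sortOf : V → S`;
terms are just variables (no function symbols).  -/

inductive PLS0.Formula (S V P : Type) : Type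
  | atom : P → List V → PLS0.Formula S V P
  | impl : PLS0.Formula S V P → PLS0.Formula S V P → PLS0.Formula S V P
  | conj : PLS0.Formula S V P → PLS0.Formula S V P → PLS0.Formula S V P
  | disj : PLS0.Formula S V P → PLS0.Formula S V P → PLS0.Formula S V P
  | neg  : PLS0.Formula S V P → PLS0.Formula S V P
  | all  : V → PLS0.Formula S V P → PLS0.Formula S V P
  | ex   : V → PLS0.Formula S V P → PLS0.Formula S V P

namespace PLS0

variable {S V P : Type} [DecidableEq V]

/-- Free variables of a formula. -/
def Formula.free : Formula S V P → Set V
  | .atom _ args => {v | v ∈ args}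
  | .impl A B => A.free ∪ B.free
  | .conj A B => A.free ∪ B.free
  | .disj A B => A.free ∪ B.free
  | .neg A => A.free
  | .all x A => A.free \ {x}
  | .ex x A => A.free \ {x}

/-- Bound variables of a formula. -/
def Formula.bound : Formula S V P → Set V
  | .atom _ _ => ∅
  | .impl A B => A.bound ∪ B.bound
  | .conj A B => A.bound ∪ B.bound
  | .disj A B => A.bound ∪ B.bound
  | .neg A => A.bound
  | .all x A => insert x A.bound
  | .ex x A => insert x A.bound

/-- `A.subst x y` replaces the free occurrences of the variable `x` by the
variable `y` in `A`. -/
def Formula.subst (x y : V) : Formula S V P → Formula S V P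
  | .atom p args => .atom p (args.map fun v => if v = x then y else v)
  | .impl A B => .impl (A.subst x y) (B.subst x y)
  | .conj A B => .conj (A.subst x y) (B.subst x y)
  | .disj A B => .disj (A.subst x y) (B.subst x y)
  | .neg A => .neg (A.subst x y)
  | .all z A => if z = x then .all z A else .all z (A.subst x y)
  | .ex z A => if z = x then .ex z A else .ex z (A.subst x y)

/-- Natural-deduction derivability `Γ ⊢ A` in `PL^S₀`.  The rules for
`⊃, ∧, ∨, ∀, ∃` are the intuitionistic ones; the primitive negation is
governed by introduction/elimination rules for the negation of each
connective: `¬(A⊃B)` has the rules of `A∧¬B`, `¬(A∧B)` those of `¬A∨¬B`,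
`¬(A∨B)` those of `¬A∧¬B`, `¬∀x A` those of `∃x ¬A`, `¬∃x A` those of
`∀x ¬A`, and `¬¬A` those of `A`. -/
inductive Deriv (sortOf : V → S) : Set (Formula S V P) → Formula S V P → Prop
  | ax {Γ A} : A ∈ Γ → Deriv sortOf Γ A
  -- implication
  | implI {Γ A B} : Deriv sortOf (insert A Γ) B → Deriv sortOf Γ (.impl A B)
  | implE {Γ A B} : Deriv sortOf Γ (.impl A B) → Deriv sortOf Γ A → Deriv sortOf Γ B
  -- conjunction
  | conjI {Γ A B} : Deriv sortOf Γ A → Deriv sortOf Γ B → Deriv sortOf Γ (.conj A B)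
  | conjE1 {Γ A B} : Deriv sortOf Γ (.conj A B) → Deriv sortOf Γ A
  | conjE2 {Γ A B} : Deriv sortOf Γ (.conj A B) → Deriv sortOf Γ B
  -- disjunction
  | disjI1 {Γ A B} : Deriv sortOf Γ A → Deriv sortOf Γ (.disj A B)
  | disjI2 {Γ A B} : Deriv sortOf Γ B → Deriv sortOf Γ (.disj A B)
  | disjE {Γ A B C} : Deriv sortOf Γ (.disj A B) → Deriv sortOf (insert A Γ) C →
      Deriv sortOf (insert B Γ) C → Deriv sortOf Γ C
  -- universal quantifier
  | allI {Γ x A} : Deriv sortOf Γ A → (∀ C ∈ Γ, x ∉ Formula.free C) →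
      Deriv sortOf Γ (.all x A)
  | allE {Γ x y A} : Deriv sortOf Γ (.all x A) → sortOf y = sortOf x →
      y ∉ Formula.bound A → Deriv sortOf Γ (A.subst x y)
  -- existential quantifier
  | exI {Γ x y A} : Deriv sortOf Γ (A.subst x y) → sortOf y = sortOf x →
      y ∉ Formula.bound A → Deriv sortOf Γ (.ex x A)
  | exE {Γ x A C} : Deriv sortOf Γ (.ex x A) → Deriv sortOf (insert A Γ) C →
      (∀ D ∈ Γ, x ∉ Formula.free D) → x ∉ Formula.free C → Deriv sortOf Γ C
  -- negated implication (rules of `A ∧ ¬B`)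
  | negImplI {Γ A B} : Deriv sortOf Γ A → Deriv sortOf Γ (.neg B) →
      Deriv sortOf Γ (.neg (.impl A B))
  | negImplE1 {Γ A B} : Deriv sortOf Γ (.neg (.impl A B)) → Deriv sortOf Γ A
  | negImplE2 {Γ A B} : Deriv sortOf Γ (.neg (.impl A B)) → Deriv sortOf Γ (.neg B)
  -- negated conjunction (rules of `¬A ∨ ¬B`)
  | negConjI1 {Γ A B} : Deriv sortOf Γ (.neg A) → Deriv sortOf Γ (.neg (.conj A B))
  | negConjI2 {Γ A B} : Deriv sortOf Γ (.neg B) → Deriv sortOf Γ (.neg (.conj A B))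
  | negConjE {Γ A B C} : Deriv sortOf Γ (.neg (.conj A B)) →
      Deriv sortOf (insert (.neg A) Γ) C → Deriv sortOf (insert (.neg B) Γ) C →
      Deriv sortOf Γ C
  -- negated disjunction (rules of `¬A ∧ ¬B`)
  | negDisjI {Γ A B} : Deriv sortOf Γ (.neg A) → Deriv sortOf Γ (.neg B) →
      Deriv sortOf Γ (.neg (.disj A B))
  | negDisjE1 {Γ A B} : Deriv sortOf Γ (.neg (.disj A B)) → Deriv sortOf Γ (.neg A)
  | negDisjE2 {Γ A B} : Deriv sortOf Γ (.neg (.disj A B)) → Deriv sortOf Γ (.neg B)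
  -- negated universal (rules of `∃x ¬A`)
  | negAllI {Γ x y A} : Deriv sortOf Γ (.neg (A.subst x y)) → sortOf y = sortOf x →
      y ∉ Formula.bound A → Deriv sortOf Γ (.neg (.all x A))
  | negAllE {Γ x A C} : Deriv sortOf Γ (.neg (.all x A)) →
      Deriv sortOf (insert (.neg A) Γ) C → (∀ D ∈ Γ, x ∉ Formula.free D) →
      x ∉ Formula.free C → Deriv sortOf Γ C
  -- negated existential (rules of `∀x ¬A`)
  | negExI {Γ x A} : Deriv sortOf Γ (.neg A) → (∀ C ∈ Γ, x ∉ Formula.free C) →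
      Deriv sortOf Γ (.neg (.ex x A))
  | negExE {Γ x y A} : Deriv sortOf Γ (.neg (.ex x A)) → sortOf y = sortOf x →
      y ∉ Formula.bound A → Deriv sortOf Γ (.neg (A.subst x y))
  -- double negation (rules of `A`)
  | negNegI {Γ A} : Deriv sortOf Γ A → Deriv sortOf Γ (.neg (.neg A))
  | negNegE {Γ A} : Deriv sortOf Γ (.neg (.neg A)) → Deriv sortOf Γ A

/-- Equivalence: `A ⇔ B := (A ⊃ B) ∧ (B ⊃ A)`. -/
def Formula.equiv (A B : Formula S V P) : Formula S V P :=
  .conj (.impl A B) (.impl B A)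

/-- Strong equivalence: `A ⇔ₛ B := (A ⇔ B) ∧ (¬A ⇔ ¬B)`. -/
def Formula.sequiv (A B : Formula S V P) : Formula S V P :=
  .conj (A.equiv B) ((Formula.neg A).equiv (Formula.neg B))

end PLS0

/-!
Soundness for the one-world Kripke models whose domains are singletons already suffices. There truth
and refutation of an atom are two independent predicates, extended to formulae by letting `¬`
interchange them, and a quantifier acts as the identity. An atom that is neither true nor refuted
defeats `A ∨ ¬A` and `¬(A ∧ ¬A)`; an atom that is both, next to one that is not true, defeats
`A ⊃ (¬A ⊃ B)`.
-/

namespace PLS0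

/-- A one-world Kripke model over singleton domains: the predicate symbols that hold and those that
are refuted. Over a singleton domain the arguments of an atom do not matter, so they are dropped. -/
structure Valuation (P : Type) where
  truth : P → Prop
  falsity : P → Prop

namespace Valuation

section Semantics

variable {S V P : Type}

mutual

/-- Truth of a formula; a quantifier ranges over a single point and is the identity. -/
def Verifies (v : Valuation P) : Formula S V P → Prop
  | .atom p _ => v.truth p
  | .impl A B => v.Verifies A → v.Verifies B
  | .conj A B => v.Verifies A ∧ v.Verifies B
  | .disj A B => v.Verifies A ∨ v.Verifies B
  | .neg A => v.Refutes A
  | .all _ A => v.Verifies A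
  | .ex _ A => v.Verifies A

/-- Refutation of a formula, the meaning of the primitive negation; it neither excludes truth nor
follows from its absence. -/
def Refutes (v : Valuation P) : Formula S V P → Prop
  | .atom p _ => v.falsity p
  | .impl A B => v.Verifies A ∧ v.Refutes B
  | .conj A B => v.Refutes A ∨ v.Refutes B
  | .disj A B => v.Refutes A ∧ v.Refutes B
  | .neg A => v.Verifies A
  | .all _ A => v.Refutes A
  | .ex _ A => v.Refutes A

end

variable [DecidableEq V]

theorem verifies_subst_and_refutes_subst (v : Valuation P) (x y : V) (A : Formula S V P) :
    (v.Verifies (A.subst x y) ↔ v.Verifies A) ∧ (v.Refutes (A.subst x y) ↔ v.Refutes A) := by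
  induction A with
  | all z A ih | ex z A ih =>
    rw [Formula.subst]
    split_ifs <;> simp only [Verifies, Refutes, ih, and_self]
  | _ => simp only [Formula.subst, Verifies, Refutes, and_self, *]

theorem verifies_subst (v : Valuation P) (x y : V) (A : Formula S V P) :
    v.Verifies (A.subst x y) ↔ v.Verifies A :=
  (v.verifies_subst_and_refutes_subst x y A).1

theorem refutes_subst (v : Valuation P) (x y : V) (A : Formula S V P) :
    v.Refutes (A.subst x y) ↔ v.Refutes A :=
  (v.verifies_subst_and_refutes_subst x y A).2

end Semantics

/-- The valuation with only truth-value gaps. -/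
def neither (P : Type) : Valuation P where
  truth _ := False
  falsity _ := False

/-- The valuation with a truth-value glut at `p` and gaps elsewhere. -/
def bothAt {P : Type} (p : P) : Valuation P where
  truth r := r = p
  falsity r := r = p

end Valuation

variable {S V P : Type} [DecidableEq V] {sortOf : V → S}

theorem Deriv.sound {Γ : Set (Formula S V P)} {A : Formula S V P} (h : Deriv sortOf Γ A)
    (v : Valuation P) (hΓ : ∀ C ∈ Γ, v.Verifies C) : v.Verifies A := by
  have extend {Γ : Set (Formula S V P)} {A : Formula S V P} (hΓ : ∀ C ∈ Γ, v.Verifies C)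
      (hA : v.Verifies A) : ∀ C ∈ insert A Γ, v.Verifies C :=
    Set.forall_mem_insert.2 ⟨hA, hΓ⟩
  induction h with
  | ax hA => exact hΓ _ hA
  | implI _ ih => exact fun hA => ih (extend hΓ hA)
  | implE _ _ ihAB ihA => exact ihAB hΓ (ihA hΓ)
  | conjI _ _ ihA ihB | negImplI _ _ ihA ihB | negDisjI _ _ ihA ihB => exact ⟨ihA hΓ, ihB hΓ⟩
  | conjE1 _ ih | negImplE1 _ ih | negDisjE1 _ ih => exact (ih hΓ).1
  | conjE2 _ ih | negImplE2 _ ih | negDisjE2 _ ih => exact (ih hΓ).2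
  | disjI1 _ ih | negConjI1 _ ih => exact Or.inl (ih hΓ)
  | disjI2 _ ih | negConjI2 _ ih => exact Or.inr (ih hΓ)
  | disjE _ _ _ ih ihA ihB | negConjE _ _ _ ih ihA ihB =>
    exact (ih hΓ).elim (fun hA => ihA (extend hΓ hA)) (fun hB => ihB (extend hΓ hB))
  | allI _ _ ih | negExI _ _ ih | negNegI _ ih | negNegE _ ih => exact ih hΓ
  | @allE _ x y A _ _ _ ih => exact (v.verifies_subst x y A).2 (ih hΓ)
  | @exI _ x y A _ _ _ ih => exact (v.verifies_subst x y A).1 (ih hΓ)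
  | @negAllI _ x y A _ _ _ ih => exact (v.refutes_subst x y A).1 (ih hΓ)
  | @negExE _ x y A _ _ _ ih => exact (v.refutes_subst x y A).2 (ih hΓ)
  | exE _ _ _ _ ih ihC | negAllE _ _ _ _ ih ihC => exact ihC (extend hΓ (ih hΓ))

theorem not_deriv_of_not_verifies {A : Formula S V P} (v : Valuation P) (hA : ¬ v.Verifies A) :
    ¬ Deriv sortOf ∅ A :=
  fun h => hA (h.sound v fun _ hC => hC.elim)

theorem not_deriv_atom_disj_neg (p : P) (args : List V) :
    ¬ Deriv sortOf ∅ (.disj (.atom p args) (.neg (.atom p args))) :=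
  not_deriv_of_not_verifies (.neither P) fun h => h.elim id id

theorem not_deriv_atom_impl_neg_impl {p q : P} (hpq : p ≠ q) (args args' : List V) :
    ¬ Deriv sortOf ∅ (.impl (.atom p args) (.impl (.neg (.atom p args)) (.atom q args'))) :=
  not_deriv_of_not_verifies (.bothAt p) fun h => hpq (h rfl rfl).symm

theorem not_deriv_neg_atom_conj_neg (p : P) (args : List V) :
    ¬ Deriv sortOf ∅ (.neg (.conj (.atom p args) (.neg (.atom p args)))) :=
  not_deriv_of_not_verifies (.neither P) fun h => h.elim id id

theorem paraconsistency_witnesses_general (sortOf : V → S) {p q : P} (hpq : p ≠ q)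
    (args args' : List V) :
    ¬ Deriv sortOf ∅ (.disj (.atom p args) (.neg (.atom p args))) ∧
    ¬ Deriv sortOf ∅ (.impl (.atom p args) (.impl (.neg (.atom p args)) (.atom q args'))) ∧
    ¬ Deriv sortOf ∅ (.neg (.conj (.atom p args) (.neg (.atom p args)))) :=
  ⟨not_deriv_atom_disj_neg p args, not_deriv_atom_impl_neg_impl hpq args args',
    not_deriv_neg_atom_conj_neg p args⟩

end PLS0

open PLS0 in
/-- In `PL^S₀` (with natural numbers as sorts, variables and
predicate symbols), for distinct propositional variables `A = p` and `B = q`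
(nullary atoms), none of the formulae `A ∨ ¬A`, `A ⊃ (¬A ⊃ B)` and
`¬(A ∧ ¬A)` is derivable. -/
theorem PLS0.paraconsistency_witnesses (p q : ℕ) (hpq : p ≠ q) :
    ¬ Deriv (id : ℕ → ℕ) ∅
        (Formula.disj (.atom p ([] : List ℕ)) (.neg (.atom p []))) ∧
    ¬ Deriv (id : ℕ → ℕ) ∅
        (Formula.impl (.atom p ([] : List ℕ))
          (.impl (.neg (.atom p [])) (.atom q []))) ∧
    ¬ Deriv (id : ℕ → ℕ) ∅
        (Formula.neg (.conj (.atom p ([] : List ℕ)) (.neg (.atom p [])))) :=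
  paraconsistency_witnesses_general id hpq [] []
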